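/- arXiv:1803.08621 — 3 statements merged into one kernel-verified Lean document; each statement's English description precedes it below -/
import Mathlib

section
/- Let M be a monoid, P a type, g : P → M, t₀ ∈ M, and let l be a list of elements of P of length n = b·r with b ≥ 1 and r ≥ 1. For each i < b let ρᵢ = (((l.drop (i·r)).take r).map g).prod be the folded value of the i-th block. Suppose t : ℕ → M satisfies: (1) t(0) = t₀; (2) for every i < b, t((i+1)·r) = t(i·r) * ρᵢ; and (3) for every i < b and every j with i·r < j < (i+1)·r, t(j) = t(j−1) * g(l[j−1]). Then for every j ≤ b·r, t(j) = t₀ * (((l.take j).map g).prod); that is, the three-step algorithm computes exactly the prefix folds of the sequence. -/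
theorem sweepline_paradigm_correct {M : Type*} [Monoid M] {P : Type*}
    (g : P → M) (t₀ : M) (b r : ℕ) (hb : 1 ≤ b) (hr : 1 ≤ r)
    (l : List P) (hl : l.length = b * r)
    (t : ℕ → M)
    (h0 : t 0 = t₀)
    (hsweep : ∀ i < b,
      t ((i + 1) * r) = t (i * r) * (((l.drop (i * r)).take r).map g).prod)
    (hrefine : ∀ i, ∀ _ : i < b, ∀ j, ∀ _ : i * r < j, ∀ hj2 : j < (i + 1) * r,
      t j = t (j - 1) * g (l.get ⟨j - 1, by
        have h1 : (i + 1) * r ≤ b * r := Nat.mul_le_mul_right r ‹i < b›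
        rw [hl]; omega⟩)) :
    ∀ j ≤ b * r, t j = t₀ * ((l.take j).map g).prod := by
  have hbd : ∀ i ≤ b, t (i * r) = t₀ * ((l.take (i * r)).map g).prod := by
    intro i
    induction i with
    | zero => intro _; simp [h0]
    | succ i ih =>
      intro hi
      rw [hsweep i hi, ih (by omega), Nat.succ_mul, List.take_add, List.map_append,
        List.prod_append, mul_assoc]
  have hin : ∀ i < b, ∀ k < r, t (i * r + k) = t₀ * ((l.take (i * r + k)).map g).prod := by
    intro i hi k
    induction k with
    | zero => intro _; exact hbd i hi.le
    | succ k ih =>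
      intro hk
      have h1 : (i + 1) * r ≤ b * r := Nat.mul_le_mul_right r hi
      have h2 : (i + 1) * r = i * r + r := Nat.succ_mul i r
      have h := hrefine i hi (i * r + (k + 1)) (by omega) (by omega)
      have hlt : i * r + k < l.length := by omega
      simp only [← Nat.add_assoc, Nat.add_sub_cancel, List.get_eq_getElem] at h
      rw [← Nat.add_assoc, h, ih (by omega), List.take_succ_eq_append_getElem hlt,
        List.map_append, List.prod_append, mul_assoc]
      simp
  intro j hj
  rcases hj.eq_or_lt with rfl | hj
  · exact hbd b le_rfl
  · have h := hin (j / r) ((Nat.div_lt_iff_lt_mul hr).2 hj) (j % r) (Nat.mod_lt _ hr)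
    rwa [Nat.div_add_mod'] at h
end

section
/- Let S be a set of segments, and let l, r : S → ℝ assign to each segment the x-coordinates of its left and right endpoints. For reals a ≤ b define the left-open set L(S,a,b) = {s ∈ S | l(s) ≤ a ∧ a < r(s) ≤ b} and the right-open set R(S,a,b) = {s ∈ S | a < l(s) ≤ b ∧ b < r(s)}. Then for all reals a ≤ m ≤ b: L(S,a,b) = L(S,a,m) ∪ (L(S,m,b) \ R(S,a,m)) and R(S,a,b) = R(S,m,b) ∪ (R(S,a,m) \ L(S,m,b)). -/
theorem seg_combine_correct {σ : Type*} (S : Set σ) (l r : σ → ℝ)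
    (L R : ℝ → ℝ → Set σ)
    (hL : ∀ a b : ℝ, a ≤ b → L a b = {s ∈ S | l s ≤ a ∧ a < r s ∧ r s ≤ b})
    (hR : ∀ a b : ℝ, a ≤ b → R a b = {s ∈ S | a < l s ∧ l s ≤ b ∧ b < r s})
    (a m b : ℝ) (ham : a ≤ m) (hmb : m ≤ b) :
    L a b = L a m ∪ (L m b \ R a m) ∧ R a b = R m b ∪ (R a m \ L m b) := by
  rw [hL a b (ham.trans hmb), hL a m ham, hL m b hmb, hR a b (ham.trans hmb), hR a m ham,
    hR m b hmb]
  constructor <;> ext s <;>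
    simp only [Set.mem_union, Set.mem_diff, Set.mem_setOf_eq] <;> grind
end

section
/- Let S be a set of segments with l, r : S → ℝ assigning the x-coordinates of the left and right endpoints of each segment. Then for all reals a, m, q, b with a ≤ m, m < q, and q ≤ b: {s ∈ S | l(s) < q ∧ q < r(s) ∧ (a < l(s) ≤ b ∨ a < r(s) ≤ b)} = {s ∈ S | a < l(s) ≤ m ∧ b < r(s)} ∪ {s ∈ S | l(s) < q ∧ q < r(s) ∧ (m < l(s) ≤ b ∨ m < r(s) ≤ b)}. -/
theorem segtree_query_correct {σ : Type*} (S : Set σ) (l r : σ → ℝ)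
    (a m q b : ℝ) (ham : a ≤ m) (hmq : m < q) (hqb : q ≤ b) :
    {s ∈ S | l s < q ∧ q < r s ∧ ((a < l s ∧ l s ≤ b) ∨ (a < r s ∧ r s ≤ b))}
      = {s ∈ S | a < l s ∧ l s ≤ m ∧ b < r s}
        ∪ {s ∈ S | l s < q ∧ q < r s ∧ ((m < l s ∧ l s ≤ b) ∨ (m < r s ∧ r s ≤ b))} := by
  ext s
  simp only [Set.mem_union, Set.mem_setOf_eq]
  constructor
  · rintro ⟨hS, h1, h2, h⟩
    by_cases hr : r s ≤ b
    · exact Or.inr ⟨hS, h1, h2, Or.inr ⟨hmq.trans h2, hr⟩⟩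
    · rcases h with ⟨h3, h4⟩ | ⟨_, h4⟩
      · by_cases hl : l s ≤ m
        · exact Or.inl ⟨hS, h3, hl, not_le.mp hr⟩
        · exact Or.inr ⟨hS, h1, h2, Or.inl ⟨not_le.mp hl, h4⟩⟩
      · exact absurd h4 hr
  · rintro (⟨hS, h1, h2, h3⟩ | ⟨hS, h1, h2, h⟩)
    · exact ⟨hS, by linarith, by linarith, Or.inl ⟨h1, by linarith⟩⟩
    · refine ⟨hS, h1, h2, ?_⟩
      rcases h with ⟨h3, h4⟩ | ⟨h3, h4⟩
      · exact Or.inl ⟨by linarith, h4⟩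
      · exact Or.inr ⟨by linarith, h4⟩
end
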